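/- arXiv:math/0406430 — 2 statements merged into one kernel-verified Lean document; each statement's English description precedes it below -/
import Mathlib

section
/- (Lemma 8.1) Let ξ be a standard Gaussian random variable, 0 < γ ≤ 1, C_γ = E|ξ|^γ, D_γ = (Var|ξ|^γ)^{1/2}, and ζ_γ = (|ξ|^γ − C_γ)/D_γ. Then there exists a constant a_γ > 0 such that log E exp(u ζ_γ) ≤ a_γ u² / 2 for every u ∈ ℝ. -/
open MeasureTheory ProbabilityTheory Real

/-- `C_γ = E |ξ|^γ` for a standard Gaussian `ξ`. -/
noncomputable def Cg (γ : ℝ) : ℝ := ∫ x, |x| ^ γ ∂(gaussianReal 0 1)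

/-- `D_γ = (Var |ξ|^γ)^{1/2}` for a standard Gaussian `ξ`. -/
noncomputable def Dg (γ : ℝ) : ℝ :=
  Real.sqrt (∫ x, (|x| ^ γ - Cg γ) ^ 2 ∂(gaussianReal 0 1))

/-!
If `exp (s X²)` is integrable then a centred `X` is sub-Gaussian. For `t² ≤ s`, the inequality
`exp y ≤ y + exp (y²)` kills the linear term, and Jensen gives
`E exp (t X) ≤ E exp (t² X²) ≤ (E exp (s X²)) ^ (t² / s)`; for `t² ≥ s`, AM-GM gives
`E exp (t X) ≤ exp (t² / (4 s)) E exp (s X²)`. Under a Gaussian measure, Fernique's theorem provides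
such an `s` for every function of at most linear growth, in particular for `|x| ^ γ` with `γ ≤ 1`.
-/

section RealInequalities

lemma exp_le_add_exp_sq (y : ℝ) : exp y ≤ y + exp (y ^ 2) := by
  have hsq : y ^ 2 + 1 ≤ exp (y ^ 2) := add_one_le_exp _
  rcases le_or_gt |y| 1 with hy | hy
  · have := (abs_le.1 (abs_exp_sub_one_sub_id_le hy)).2
    linarith
  rcases lt_abs.1 hy with hy | hy
  · have : exp y ≤ exp (y ^ 2) := exp_le_exp.2 (by nlinarith)
    linarith
  · have : exp y ≤ 1 := exp_le_one_iff.2 (by linarith)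
    nlinarith

lemma mul_le_sq_div_add_mul_sq {s : ℝ} (hs : 0 < s) (t x : ℝ) :
    t * x ≤ t ^ 2 / (4 * s) + s * x ^ 2 := by
  have hsq : t ^ 2 / (4 * s) + s * x ^ 2 - t * x = (t - 2 * s * x) ^ 2 / (4 * s) := by
    field_simp
    ring
  have : 0 ≤ (t - 2 * s * x) ^ 2 / (4 * s) := by positivity
  linarith

lemma rpow_le_one_add {γ : ℝ} (hγ0 : 0 ≤ γ) (hγ1 : γ ≤ 1) {x : ℝ} (hx : 0 ≤ x) :
    x ^ γ ≤ 1 + x := by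
  rcases le_total x 1 with h | h
  · linarith [rpow_le_one hx h hγ0]
  · linarith [rpow_le_self_of_one_le h hγ1]

lemma abs_abs_rpow_div_le {γ : ℝ} (hγ0 : 0 ≤ γ) (hγ1 : γ ≤ 1) {d : ℝ} (hd : 0 ≤ d) (x : ℝ) :
    |(|x| ^ γ / d)| ≤ 1 / d + 1 / d * |x| := by
  rw [abs_of_nonneg (by positivity)]
  calc |x| ^ γ / d ≤ (1 + |x|) / d := by gcongr; exact rpow_le_one_add hγ0 hγ1 (abs_nonneg x)
    _ = 1 / d + 1 / d * |x| := by ring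

end RealInequalities

section MomentGeneratingFunction

variable {Ω : Type*} {mΩ : MeasurableSpace Ω} {μ : Measure Ω} {Y : Ω → ℝ} {s : ℝ}

lemma mgf_mul_le_mgf_rpow [IsProbabilityMeasure μ] {p : ℝ} (hp0 : 0 ≤ p) (hp1 : p ≤ 1)
    (hs : Integrable (fun ω ↦ exp (s * Y ω)) μ) : mgf Y μ (p * s) ≤ mgf Y μ s ^ p := by
  have hexp (ω : Ω) : exp (p * s * Y ω) = exp (s * Y ω) ^ p := by
    rw [← exp_mul]
    ring_nf
  have hps : Integrable (fun ω ↦ exp (p * s * Y ω)) μ :=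
    convex_integrableExpSet.smul_mem_of_zero_mem (by simp [integrableExpSet]) hs ⟨hp0, hp1⟩
  simp only [mgf, hexp] at hps ⊢
  exact (concaveOn_rpow hp0 hp1).le_map_integral (continuous_rpow_const hp0).continuousOn
    isClosed_Ici (ae_of_all _ fun ω ↦ (exp_pos _).le) hs hps

lemma cgf_nonneg_of_nonneg [IsProbabilityMeasure μ] (hY : 0 ≤ᵐ[μ] Y) (hs : 0 ≤ s)
    (hint : Integrable (fun ω ↦ exp (s * Y ω)) μ) : 0 ≤ cgf Y μ s := by
  refine log_nonneg ?_
  calc (1 : ℝ) = ∫ _, 1 ∂μ := by simp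
    _ ≤ mgf Y μ s := integral_mono_ae (integrable_const _) hint <| by
        filter_upwards [hY] with ω hω using one_le_exp (mul_nonneg hs hω)

end MomentGeneratingFunction

section SquareExponentialMoment

variable {Ω : Type*} {mΩ : MeasurableSpace Ω} {μ : Measure Ω} {X Y : Ω → ℝ} {s t : ℝ}

lemma integrable_exp_mul_of_integrable_exp_mul_sq (hX : AEMeasurable X μ) (hs : 0 < s)
    (hexp : Integrable (fun ω ↦ exp (s * X ω ^ 2)) μ) (t : ℝ) :
    Integrable (fun ω ↦ exp (t * X ω)) μ := by
  refine (hexp.const_mul (exp (t ^ 2 / (4 * s)))).mono' (by fun_prop) (ae_of_all _ fun ω ↦ ?_)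
  rw [norm_of_nonneg (exp_pos _).le, ← exp_add]
  exact exp_le_exp.2 (mul_le_sq_div_add_mul_sq hs t (X ω))

lemma integrable_of_integrable_exp_mul_sq (hX : AEMeasurable X μ) (hs : 0 < s)
    (hexp : Integrable (fun ω ↦ exp (s * X ω ^ 2)) μ) : Integrable X μ := by
  have huniv : integrableExpSet X μ = Set.univ :=
    Set.eq_univ_of_forall (integrable_exp_mul_of_integrable_exp_mul_sq hX hs hexp)
  exact integrable_of_mem_interior_integrableExpSet (by simp [huniv])

lemma mgf_le_exp_mul_mgf_sq (hs : 0 < s) (hexp : Integrable (fun ω ↦ exp (s * X ω ^ 2)) μ) (t : ℝ) :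
    mgf X μ t ≤ exp (t ^ 2 / (4 * s)) * mgf (X ^ 2) μ s := by
  simp only [mgf, ← integral_const_mul, Pi.pow_apply]
  refine integral_mono_of_nonneg (ae_of_all _ fun ω ↦ (exp_pos _).le) (hexp.const_mul _)
    (ae_of_all _ fun ω ↦ ?_)
  simpa only [← exp_add] using exp_le_exp.2 (mul_le_sq_div_add_mul_sq hs t (X ω))

lemma mgf_le_mgf_sq_sq (hX : Integrable X μ) (hmean : μ[X] = 0)
    (hexp : Integrable (fun ω ↦ exp (t ^ 2 * X ω ^ 2)) μ) :
    mgf X μ t ≤ mgf (X ^ 2) μ (t ^ 2) := by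
  calc mgf X μ t ≤ ∫ ω, (t * X ω + exp (t ^ 2 * X ω ^ 2)) ∂μ := by
        refine integral_mono_of_nonneg (ae_of_all _ fun ω ↦ (exp_pos _).le)
          ((hX.const_mul t).add hexp) (ae_of_all _ fun ω ↦ ?_)
        simpa only [mul_pow] using exp_le_add_exp_sq (t * X ω)
    _ = mgf (X ^ 2) μ (t ^ 2) := by
        rw [integral_add (hX.const_mul t) hexp, integral_const_mul, hmean, mul_zero, zero_add]
        rfl

lemma mgf_le_mgf_sq_rpow [IsProbabilityMeasure μ] (hX : Integrable X μ) (hmean : μ[X] = 0)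
    (hs : 0 < s) (hexp : Integrable (fun ω ↦ exp (s * X ω ^ 2)) μ) (ht : t ^ 2 ≤ s) :
    mgf X μ t ≤ mgf (X ^ 2) μ s ^ (t ^ 2 / s) := by
  have hint : Integrable (fun ω ↦ exp (t ^ 2 * X ω ^ 2)) μ :=
    integrable_exp_mul_of_nonneg_of_le hexp (sq_nonneg t) ht
  calc mgf X μ t ≤ mgf (X ^ 2) μ (t ^ 2) := mgf_le_mgf_sq_sq hX hmean hint
    _ = mgf (X ^ 2) μ (t ^ 2 / s * s) := by rw [div_mul_cancel₀ _ hs.ne']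
    _ ≤ mgf (X ^ 2) μ s ^ (t ^ 2 / s) :=
        mgf_mul_le_mgf_rpow (by positivity) ((div_le_one hs).2 ht) hexp

theorem exists_hasSubgaussianMGF_of_integrable_exp_mul_sq [IsProbabilityMeasure μ]
    (hX : AEMeasurable X μ) (hmean : μ[X] = 0) (hs : 0 < s)
    (hexp : Integrable (fun ω ↦ exp (s * X ω ^ 2)) μ) :
    ∃ c : NNReal, 0 < c ∧ HasSubgaussianMGF X c μ := by
  set L := cgf (X ^ 2) μ s
  have hL : 0 ≤ L := cgf_nonneg_of_nonneg (ae_of_all _ fun ω ↦ sq_nonneg (X ω)) hs.le hexp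
  have hM : mgf (X ^ 2) μ s = exp L := (exp_cgf hexp).symm
  have hc : 0 < (1 / 2 + 2 * L) / s := by positivity
  refine ⟨toNNReal _, toNNReal_pos.2 hc,
    integrable_exp_mul_of_integrable_exp_mul_sq hX hs hexp, fun t ↦ ?_⟩
  have hsplit : (1 / 2 + 2 * L) / s * t ^ 2 / 2 = t ^ 2 / (4 * s) + L * (t ^ 2 / s) := by
    field_simp
    ring
  rw [coe_toNNReal _ hc.le, hsplit]
  rcases le_total (t ^ 2) s with ht | ht
  · calc mgf X μ t ≤ exp L ^ (t ^ 2 / s) := hM ▸ mgf_le_mgf_sq_rpow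
          (integrable_of_integrable_exp_mul_sq hX hs hexp) hmean hs hexp ht
      _ = exp (L * (t ^ 2 / s)) := (exp_mul _ _).symm
      _ ≤ _ := exp_le_exp.2 (le_add_of_nonneg_left (by positivity))
  · calc mgf X μ t ≤ exp (t ^ 2 / (4 * s)) * exp L := hM ▸ mgf_le_exp_mul_mgf_sq hs hexp t
      _ = exp (t ^ 2 / (4 * s) + L) := (exp_add _ _).symm
      _ ≤ _ := by
        gcongr
        exact le_mul_of_one_le_right hL ((one_le_div hs).2 ht)

lemma integrable_exp_mul_sq_of_abs_le_add_mul {A B : ℝ} (hY : AEMeasurable Y μ) (hs : 0 < s)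
    (hexp : Integrable (fun ω ↦ exp (s * X ω ^ 2)) μ) (hYX : ∀ᵐ ω ∂μ, |Y ω| ≤ A + B * X ω) :
    Integrable (fun ω ↦ exp (s / (2 * (B ^ 2 + 1)) * Y ω ^ 2)) μ := by
  refine (hexp.const_mul (exp (s * A ^ 2))).mono' (by fun_prop) ?_
  filter_upwards [hYX] with ω hω
  rw [norm_of_nonneg (exp_pos _).le, ← exp_add, exp_le_exp, div_mul_eq_mul_div,
    div_le_iff₀ (by positivity), ← mul_add, mul_assoc]
  have hsq : Y ω ^ 2 ≤ (A ^ 2 + X ω ^ 2) * (2 * (B ^ 2 + 1)) :=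
    calc Y ω ^ 2 ≤ (A + B * X ω) ^ 2 := sq_le_sq.2 (hω.trans (le_abs_self _))
      _ ≤ 2 * (A ^ 2 + (B * X ω) ^ 2) := add_sq_le
      _ ≤ (A ^ 2 + X ω ^ 2) * (2 * (B ^ 2 + 1)) := by nlinarith [sq_nonneg (A * B), sq_nonneg (X ω)]
  gcongr

end SquareExponentialMoment

theorem log_mgf_zeta_gamma_subgaussian_general {E : Type*} [NormedAddCommGroup E] [NormedSpace ℝ E]
    [MeasurableSpace E] [BorelSpace E] [SecondCountableTopology E] [CompleteSpace E]
    (μ : Measure E) [IsGaussian μ] {f : E → ℝ} (hf : AEMeasurable f μ) {A B : ℝ}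
    (hfle : ∀ᵐ x ∂μ, |f x| ≤ A + B * ‖x‖) :
    ∃ c : NNReal, 0 < c ∧ HasSubgaussianMGF (fun x ↦ f x - μ[f]) c μ := by
  obtain ⟨s, hs, hexp⟩ := IsGaussian.exists_integrable_exp_sq μ
  have hf_int : Integrable f μ := integrable_of_integrable_exp_mul_sq hf (by positivity)
    (integrable_exp_mul_sq_of_abs_le_add_mul hf hs hexp hfle)
  have hmean : ∫ x, (f x - μ[f]) ∂μ = 0 := by simp [integral_sub hf_int (integrable_const _)]
  have hle : ∀ᵐ x ∂μ, |f x - μ[f]| ≤ (A + |μ[f]|) + B * ‖x‖ := by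
    filter_upwards [hfle] with x hx
    linarith [abs_sub (f x) μ[f]]
  exact exists_hasSubgaussianMGF_of_integrable_exp_mul_sq (by fun_prop) hmean (by positivity)
    (integrable_exp_mul_sq_of_abs_le_add_mul (by fun_prop) hs hexp hle)

/-- **Lemma 8.1.** Let `ξ` be standard Gaussian, `0 < γ ≤ 1`,
`ζ_γ = (|ξ|^γ − C_γ)/D_γ`.  Then there is `a_γ > 0` with
`log E exp (u ζ_γ) ≤ a_γ u² / 2` for every `u ∈ ℝ`. -/
theorem log_mgf_zeta_gamma_subgaussian (γ : ℝ) (hγ0 : 0 < γ) (hγ1 : γ ≤ 1) :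
    ∃ a : ℝ, 0 < a ∧ ∀ u : ℝ,
      Real.log (∫ x, Real.exp (u * ((|x| ^ γ - Cg γ) / Dg γ)) ∂(gaussianReal 0 1))
        ≤ a * u ^ 2 / 2 := by
  obtain ⟨a, ha, h⟩ := log_mgf_zeta_gamma_subgaussian_general (gaussianReal 0 1)
    (f := fun x ↦ |x| ^ γ / Dg γ)
    (by fun_prop) (ae_of_all _ (abs_abs_rpow_div_le hγ0.le hγ1 (sqrt_nonneg _)))
  exact ⟨a, ha, fun u ↦ by simpa [cgf, mgf, Cg, integral_div, sub_div] using h.cgf_le u⟩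
end

section
/- (Lemma 8.3) Assume the volatility model and notation given in the context, and let θ̄_I = |I|^{-1} Σ_{t∈I} θ_t. On any event where (Δ_I / v_I) s_γ |I|^{−1/2} < 1 and |θ̃_I − θ̄_I| ≤ λ v_I hold, one has ṽ_I ≥ v_I ( √(1 − (Δ_I/v_I)² s_γ² |I|^{−1}) − s_γ λ |I|^{−1/2} ) ≥ v_I ( 1 − s_γ |I|^{−1/2} (Δ_I/v_I + λ) ). -/
open MeasureTheory ProbabilityTheory Real

/-- `s_γ = D_γ / C_γ`. -/
noncomputable def sg (γ : ℝ) : ℝ := Dg γ / Cg γ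

variable {Ω : Type*}

/-- The target process `θ_t = C_γ σ_t^γ`. -/
noncomputable def theta (γ : ℝ) (σ : ℕ → Ω → ℝ) (t : ℕ) (ω : Ω) : ℝ :=
  Cg γ * σ t ω ^ γ

/-- The local average estimate `θ̃_I = |I|⁻¹ Σ_{t∈I} |R_t|^γ`. -/
noncomputable def thetaTilde (γ : ℝ) (R : ℕ → Ω → ℝ) (I : Finset ℕ) (ω : Ω) : ℝ :=
  (I.card : ℝ)⁻¹ * ∑ t ∈ I, |R t ω| ^ γ

/-- The local mean `θ̄_I = |I|⁻¹ Σ_{t∈I} θ_t`. -/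
noncomputable def thetaBar (γ : ℝ) (σ : ℕ → Ω → ℝ) (I : Finset ℕ) (ω : Ω) : ℝ :=
  (I.card : ℝ)⁻¹ * ∑ t ∈ I, theta γ σ t ω

/-- The departure from homogeneity `Δ_I = sup_{t∈I} |θ_t − θ_τ|`. -/
noncomputable def Delta (γ : ℝ) (σ : ℕ → Ω → ℝ) (τ : ℕ) (I : Finset ℕ) (ω : Ω) : ℝ :=
  ⨆ t : I, |theta γ σ t ω - theta γ σ τ ω|

/-- The conditional standard deviation `v_I = (s_γ² |I|⁻² Σ_{t∈I} θ_t²)^{1/2}`. -/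
noncomputable def vcond (γ : ℝ) (σ : ℕ → Ω → ℝ) (I : Finset ℕ) (ω : Ω) : ℝ :=
  Real.sqrt (sg γ ^ 2 / (I.card : ℝ) ^ 2 * ∑ t ∈ I, theta γ σ t ω ^ 2)

/-- The estimated conditional standard deviation `ṽ_I = s_γ θ̃_I |I|^{-1/2}`. -/
noncomputable def vTilde (γ : ℝ) (R : ℕ → Ω → ℝ) (I : Finset ℕ) (ω : Ω) : ℝ :=
  sg γ * thetaTilde γ R I ω / Real.sqrt (I.card : ℝ)

/-! König–Huygens shows that the mean square of a family exceeds the square of its mean by at most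
`D²` if the family stays within `D` of some level `c`. For the `θ_t` this reads
`v_I² ≤ (r Δ_I)² + (r θ̄_I)²` with `r = s_γ |I|^{-1/2}`, i.e. `v_I √(1 − (r Δ_I / v_I)²) ≤ r θ̄_I`.
Replacing `θ̄_I` by `θ̃_I` costs at most `r λ v_I`, which is the first inequality; the second one is
`1 − x ≤ √(1 − x²)` at `x = r Δ_I / v_I`. -/

section SquareRoot

variable {x a b v : ℝ}

theorem one_sub_le_sqrt_one_sub_sq (hx0 : 0 ≤ x) (hx1 : x ≤ 1) : 1 - x ≤ √(1 - x ^ 2) :=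
  Real.le_sqrt_of_sq_le (by linarith [mul_nonneg hx0 (sub_nonneg.2 hx1)])

theorem mul_sqrt_one_sub_div_sq_le (hb : 0 ≤ b) (h : v ^ 2 ≤ a ^ 2 + b ^ 2) :
    v * √(1 - (a / v) ^ 2) ≤ b := by
  rcases le_or_gt v 0 with hv | hv
  · exact (mul_nonpos_of_nonpos_of_nonneg hv (Real.sqrt_nonneg _)).trans hb
  · calc v * √(1 - (a / v) ^ 2) = √(v ^ 2 * (1 - (a / v) ^ 2)) := by
          rw [Real.sqrt_mul (sq_nonneg v), Real.sqrt_sq hv.le]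
      _ = √(v ^ 2 - a ^ 2) := by congr 1; field_simp
      _ ≤ b := Real.sqrt_le_iff.2 ⟨hb, by linarith⟩

end SquareRoot

section MeanSquare

variable {ι K : Type*} [Field K] {I : Finset ι}

theorem card_inv_mul_sum_sub_sq (hI : (I.card : K) ≠ 0) (f : ι → K) (c : K) :
    (I.card : K)⁻¹ * ∑ t ∈ I, (f t - c) ^ 2 =
      (I.card : K)⁻¹ * ∑ t ∈ I, f t ^ 2 - ((I.card : K)⁻¹ * ∑ t ∈ I, f t) ^ 2 +
        ((I.card : K)⁻¹ * ∑ t ∈ I, f t - c) ^ 2 := by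
  simp only [sub_sq, Finset.sum_add_distrib, Finset.sum_sub_distrib, ← Finset.sum_mul,
    ← Finset.mul_sum, Finset.sum_const, nsmul_eq_mul]
  field_simp
  ring

theorem card_inv_mul_sum_sq_le [LinearOrder K] [IsStrictOrderedRing K] (hI : I.Nonempty)
    {f : ι → K} {c D : K} (hD : ∀ t ∈ I, |f t - c| ≤ D) :
    (I.card : K)⁻¹ * ∑ t ∈ I, f t ^ 2 ≤ D ^ 2 + ((I.card : K)⁻¹ * ∑ t ∈ I, f t) ^ 2 := by
  have card_pos : 0 < (I.card : K) := Nat.cast_pos.2 hI.card_pos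
  have mean_sub_sq_le : (I.card : K)⁻¹ * ∑ t ∈ I, (f t - c) ^ 2 ≤ D ^ 2 := by
    rw [inv_mul_le_iff₀ card_pos, ← nsmul_eq_mul]
    exact Finset.sum_le_card_nsmul I _ _ fun t ht => sq_le_sq.2 ((hD t ht).trans (le_abs_self D))
  linarith [card_inv_mul_sum_sub_sq card_pos.ne' f c,
    sq_nonneg ((I.card : K)⁻¹ * ∑ t ∈ I, f t - c)]

end MeanSquare

section Perturbation

variable {r v D A T lam : ℝ}

theorem mul_sqrt_sub_le_of_abs_sub_le (hr : 0 ≤ r) (hA : 0 ≤ A)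
    (hv : v ^ 2 ≤ (r * D) ^ 2 + (r * A) ^ 2) (hT : |T - A| ≤ lam * v) :
    v * (√(1 - (r * D / v) ^ 2) - r * lam) ≤ r * T :=
  calc v * (√(1 - (r * D / v) ^ 2) - r * lam)
      = v * √(1 - (r * D / v) ^ 2) - r * (lam * v) := by ring
    _ ≤ r * A - r * (lam * v) :=
        sub_le_sub_right (mul_sqrt_one_sub_div_sq_le (mul_nonneg hr hA) hv) _
    _ = r * (A - lam * v) := by ring
    _ ≤ r * T := mul_le_mul_of_nonneg_left (sub_le_of_abs_sub_le_left hT) hr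

theorem one_sub_mul_add_le_sqrt_sub (hx0 : 0 ≤ r * D / v) (hx1 : r * D / v ≤ 1) :
    1 - r * (D / v + lam) ≤ √(1 - (r * D / v) ^ 2) - r * lam :=
  calc 1 - r * (D / v + lam) = 1 - r * D / v - r * lam := by ring
    _ ≤ √(1 - (r * D / v) ^ 2) - r * lam :=
        sub_le_sub_right (one_sub_le_sqrt_one_sub_sq hx0 hx1) _

end Perturbation

theorem vTilde_lower_bound_general {ι : Type*} {I : Finset ι} (hI : I.Nonempty) {θ : ι → ℝ}
    (hθ : 0 ≤ ∑ t ∈ I, θ t) {s c D v T lam : ℝ} (hs : 0 ≤ s)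
    (hD : ∀ t ∈ I, |θ t - c| ≤ D)
    (hv : v = √(s ^ 2 / (I.card : ℝ) ^ 2 * ∑ t ∈ I, θ t ^ 2))
    (hx : D / v * s / √(I.card : ℝ) < 1)
    (hT : |T - (I.card : ℝ)⁻¹ * ∑ t ∈ I, θ t| ≤ lam * v) :
    v * (√(1 - (D / v) ^ 2 * s ^ 2 / (I.card : ℝ)) - s * lam / √(I.card : ℝ))
        ≤ s * T / √(I.card : ℝ) ∧
      v * (1 - s / √(I.card : ℝ) * (D / v + lam))
        ≤ v * (√(1 - (D / v) ^ 2 * s ^ 2 / (I.card : ℝ)) - s * lam / √(I.card : ℝ)) := by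
  have hv0 : 0 ≤ v := hv ▸ Real.sqrt_nonneg _
  have hD0 : 0 ≤ D := let ⟨t, ht⟩ := hI; (abs_nonneg _).trans (hD t ht)
  obtain ⟨r, hr⟩ : ∃ r, r = s / √(I.card : ℝ) := ⟨_, rfl⟩
  have hr0 : 0 ≤ r := hr ▸ div_nonneg hs (Real.sqrt_nonneg _)
  have r_sq : r ^ 2 = s ^ 2 / (I.card : ℝ) := by
    rw [hr, div_pow, Real.sq_sqrt (Nat.cast_nonneg _)]
  have v_sq_le : v ^ 2 ≤ (r * D) ^ 2 + (r * ((I.card : ℝ)⁻¹ * ∑ t ∈ I, θ t)) ^ 2 :=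
    calc v ^ 2 = s ^ 2 / (I.card : ℝ) ^ 2 * ∑ t ∈ I, θ t ^ 2 := by
          rw [hv, Real.sq_sqrt (by positivity)]
      _ = r ^ 2 * ((I.card : ℝ)⁻¹ * ∑ t ∈ I, θ t ^ 2) := by rw [r_sq]; ring
      _ ≤ r ^ 2 * (D ^ 2 + ((I.card : ℝ)⁻¹ * ∑ t ∈ I, θ t) ^ 2) :=
          mul_le_mul_of_nonneg_left (card_inv_mul_sum_sq_le hI hD) (sq_nonneg r)
      _ = (r * D) ^ 2 + (r * ((I.card : ℝ)⁻¹ * ∑ t ∈ I, θ t)) ^ 2 := by ring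
  have x_eq : D / v * s / √(I.card : ℝ) = r * D / v := by rw [hr]; ring
  have x_sq_eq : (D / v) ^ 2 * s ^ 2 / (I.card : ℝ) = (r * D / v) ^ 2 := by
    rw [mul_div_assoc, ← r_sq]; ring
  rw [x_eq] at hx
  rw [x_sq_eq, mul_div_right_comm s lam, mul_div_right_comm s T, ← hr]
  exact ⟨mul_sqrt_sub_le_of_abs_sub_le hr0 (by positivity) v_sq_le hT,
    mul_le_mul_of_nonneg_left (one_sub_mul_add_le_sqrt_sub (by positivity) hx.le) hv0⟩

theorem Cg_nonneg (γ : ℝ) : 0 ≤ Cg γ :=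
  integral_nonneg fun x => Real.rpow_nonneg (abs_nonneg x) γ

theorem sg_nonneg (γ : ℝ) : 0 ≤ sg γ :=
  div_nonneg (Real.sqrt_nonneg _) (Cg_nonneg γ)

theorem theta_nonneg (γ : ℝ) {σ : ℕ → Ω → ℝ} {t : ℕ} {ω : Ω} (hσ : 0 ≤ σ t ω) :
    0 ≤ theta γ σ t ω :=
  mul_nonneg (Cg_nonneg γ) (Real.rpow_nonneg hσ γ)

theorem abs_theta_sub_le_Delta (γ : ℝ) (σ : ℕ → Ω → ℝ) (τ : ℕ) (ω : Ω) {I : Finset ℕ} {t : ℕ}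
    (ht : t ∈ I) : |theta γ σ t ω - theta γ σ τ ω| ≤ Delta γ σ τ I ω :=
  le_ciSup (f := fun t : I => |theta γ σ t ω - theta γ σ τ ω|)
    (Set.finite_range _).bddAbove ⟨t, ht⟩

/-- **Lemma 8.3.** Pointwise: if `(Δ_I/v_I) s_γ |I|^{-1/2} < 1` and
`|θ̃_I − θ̄_I| ≤ λ v_I` hold (at a sample point `ω`), then
`ṽ_I ≥ v_I (√(1 − (Δ_I/v_I)² s_γ² |I|⁻¹) − s_γ λ |I|^{-1/2})
     ≥ v_I (1 − s_γ |I|^{-1/2} (Δ_I/v_I + λ))`. -/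
theorem vTilde_lower_bound
    (ξ σ : ℕ → Ω → ℝ) (γ : ℝ) (hγ0 : 0 < γ) (hγ1 : γ ≤ 1)
    (hσpos : ∀ t ω, 0 < σ t ω)
    (lam : ℝ) (hlam : 0 ≤ lam) (τ m : ℕ) (hm : m < τ) (ω : Ω)
    (h1 : (Delta γ σ τ (Finset.Icc (τ - m) τ) ω
            / vcond γ σ (Finset.Icc (τ - m) τ) ω) * sg γ
          / Real.sqrt ((Finset.Icc (τ - m) τ).card : ℝ) < 1)
    (h2 : |thetaTilde γ (fun t ω => σ t ω * ξ t ω) (Finset.Icc (τ - m) τ) ω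
            - thetaBar γ σ (Finset.Icc (τ - m) τ) ω|
          ≤ lam * vcond γ σ (Finset.Icc (τ - m) τ) ω) :
    vcond γ σ (Finset.Icc (τ - m) τ) ω
        * (Real.sqrt (1 - (Delta γ σ τ (Finset.Icc (τ - m) τ) ω
              / vcond γ σ (Finset.Icc (τ - m) τ) ω) ^ 2 * sg γ ^ 2
              / ((Finset.Icc (τ - m) τ).card : ℝ))
            - sg γ * lam / Real.sqrt ((Finset.Icc (τ - m) τ).card : ℝ))
      ≤ vTilde γ (fun t ω => σ t ω * ξ t ω) (Finset.Icc (τ - m) τ) ω ∧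
    vcond γ σ (Finset.Icc (τ - m) τ) ω
        * (1 - sg γ / Real.sqrt ((Finset.Icc (τ - m) τ).card : ℝ)
            * (Delta γ σ τ (Finset.Icc (τ - m) τ) ω
                / vcond γ σ (Finset.Icc (τ - m) τ) ω + lam))
      ≤ vcond γ σ (Finset.Icc (τ - m) τ) ω
        * (Real.sqrt (1 - (Delta γ σ τ (Finset.Icc (τ - m) τ) ω
              / vcond γ σ (Finset.Icc (τ - m) τ) ω) ^ 2 * sg γ ^ 2
              / ((Finset.Icc (τ - m) τ).card : ℝ))
            - sg γ * lam / Real.sqrt ((Finset.Icc (τ - m) τ).card : ℝ)) := by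
  exact vTilde_lower_bound_general (Finset.nonempty_Icc.2 (Nat.sub_le τ m))
    (Finset.sum_nonneg fun t _ => theta_nonneg γ (hσpos t ω).le) (sg_nonneg γ)
    (fun _ => abs_theta_sub_le_Delta γ σ τ ω) rfl h1 h2
end
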